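/- arXiv:1403.5251 — 2 statements merged into one kernel-verified Lean document; each statement's English description precedes it below -/
import Mathlib

section
/- Fix an integer n ≥ 4 and let B(q) be the n×n matrix over ℚ(q) with B(q)_{ii} = [2]_q for all i, B(q)_{ij} = −1 whenever {i,j} is an edge of the D_n Dynkin diagram (edges {i,i+1} for 1 ≤ i ≤ n−2 together with {n−2,n}), and 0 otherwise (the symmetrized q-Cartan matrix of type D_n). For 1 ≤ i ≤ n−2 set w_i = ⟨n−1⟩_q^{−1} · ( ⟨n−i−1⟩_q Σ_{j=1}^{i−1} [j]_q e_j + [i]_q ( Σ_{j=i}^{n−2} ⟨n−j−1⟩_q e_j + e_{n−1} + e_n ) ) ∈ ℚ(q)^n, set w_{n−1} = ⟨n−1⟩_q^{−1} · ( Σ_{j=1}^{n−2} [j]_q e_j + ([n]_q/[2]_q) e_{n−1} + ([n−2]_q/[2]_q) e_n ), and set w_n = ⟨n−1⟩_q^{−1} · ( Σ_{j=1}^{n−2} [j]_q e_j + ([n−2]_q/[2]_q) e_{n−1} + ([n]_q/[2]_q) e_n ). Then B(q) · w_i = e_i for every 1 ≤ i ≤ n; equivalently, w_i is the i-th column of B(q)^{−1}.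 -/
/-!
Write `[m]` for `qNum m` and `⟨m⟩` for `qWh m`. Both sequences satisfy the recurrence
`a (m + 2) = [2] * a (m + 1) - a m`, which makes every row of `B(q) w_i` away from the diagonal
and from the branch vertex vanish. The branch vertex and the two end vertices are covered by
`⟨0⟩ = 2` and `⟨1⟩ = [2]`. On the diagonal, the identities
`[m + 2] - [m] = ⟨m + 1⟩` and `[i + 2]⟨k + 1⟩ - [i + 1]⟨k⟩ = ⟨i + k + 2⟩` produce the factor
`⟨n - 1⟩`, which cancels against the normalization since `⟨m⟩ ≠ 0` (evaluate `q ^ (2 * m) + 1`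
at `q = 1`).

The matrix enters only through `rowSum_typeD`, which evaluates a row of `B(q)` on a vector.
-/

/-- The variable `q`, as an element of the field `ℚ(q)` of rational functions. -/
noncomputable def qq : RatFunc ℚ := RatFunc.X

/-- The quantum number `[m]_q = (q^m − q^{−m})/(q − q^{−1}) = Σ_{i=0}^{m−1} q^{m−1−2i}`. -/
noncomputable def qNum (m : ℕ) : RatFunc ℚ :=
  ∑ i ∈ Finset.range m, qq ^ ((m : ℤ) - 1 - 2 * (i : ℤ))

/-- `⟨m⟩_q = q^m + q^{−m}`. -/
noncomputable def qWh (m : ℕ) : RatFunc ℚ := qq ^ (m : ℤ) + qq ^ (-(m : ℤ))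

/-- Adjacency of the `1`-based vertices `I`, `J` in the Dynkin diagram of type `D_n`:
the edges are `{i, i+1}` for `1 ≤ i ≤ n−2`, together with `{n−2, n}`. -/
def DnAdj (n I J : ℕ) : Prop :=
  ((I + 1 = J ∨ J + 1 = I) ∧ I + 1 ≤ n ∧ J + 1 ≤ n) ∨
    (I = n - 2 ∧ J = n) ∨ (I = n ∧ J = n - 2)

instance (n I J : ℕ) : Decidable (DnAdj n I J) := by unfold DnAdj; infer_instance

/-! ### Quantum numbers -/

lemma qq_ne_zero : qq ≠ 0 := RatFunc.X_ne_zero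

lemma qNum_zero : qNum 0 = 0 := by simp [qNum]

lemma qNum_one : qNum 1 = 1 := by simp [qNum]

lemma qNum_succ (m : ℕ) : qNum (m + 1) = qq * qNum m + (qq⁻¹) ^ m := by
  unfold qNum
  rw [Finset.sum_range_succ, Finset.mul_sum]
  congr 1
  · refine Finset.sum_congr rfl fun i _ => ?_
    rw [← zpow_one_add₀ qq_ne_zero]
    congr 1
    push_cast
    ring
  · rw [inv_pow, ← zpow_natCast, ← zpow_neg]
    congr 1
    push_cast
    ring

lemma qWh_eq (m : ℕ) : qWh m = qq ^ m + (qq⁻¹) ^ m := by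
  simp [qWh]

lemma qNum_two : qNum 2 = qq + qq⁻¹ := by
  rw [qNum_succ, qNum_one]
  ring

lemma qWh_zero : qWh 0 = 2 := by
  rw [qWh_eq]
  norm_num

lemma qWh_one : qWh 1 = qNum 2 := by
  rw [qWh_eq, qNum_two]
  ring

lemma qNum_rec (m : ℕ) : qNum (m + 2) = qNum 2 * qNum (m + 1) - qNum m := by
  have h : qq * qq⁻¹ = 1 := mul_inv_cancel₀ qq_ne_zero
  rw [qNum_two, qNum_succ (m + 1), qNum_succ m]
  linear_combination (-qNum m) * h

lemma qWh_rec (m : ℕ) : qWh (m + 2) = qNum 2 * qWh (m + 1) - qWh m := by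
  have h : qq * qq⁻¹ = 1 := mul_inv_cancel₀ qq_ne_zero
  rw [qNum_two, qWh_eq, qWh_eq, qWh_eq]
  linear_combination (-qq ^ m - (qq⁻¹) ^ m) * h

lemma qNum_sub (m : ℕ) : qNum (m + 2) - qNum m = qWh (m + 1) := by
  induction m using Nat.twoStepInduction with
  | zero => rw [qNum_zero, zero_add, zero_add, qWh_one, sub_zero]
  | one =>
    rw [qNum_rec 1, qWh_rec 0, zero_add, qWh_one, qNum_one, qWh_zero]
    ring
  | more m h1 h2 =>
    rw [qWh_rec (m + 1), ← h1, ← h2, qNum_rec (m + 2), qNum_rec m]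
    ring

/-- The Wronskian-type identity giving the diagonal entries in the rows of the long arm. -/
lemma qNum_mul_qWh_sub (i k : ℕ) :
    qNum (i + 2) * qWh (k + 1) - qNum (i + 1) * qWh k = qWh (i + k + 2) := by
  induction k using Nat.twoStepInduction with
  | zero =>
    have h := qNum_sub (i + 1)
    rw [qNum_rec (i + 1)] at h
    rw [zero_add, qWh_one, qWh_zero, add_zero, ← h]
    ring
  | one =>
    have h := qNum_sub (i + 2)
    rw [qNum_rec (i + 2), qNum_rec (i + 1)] at h
    rw [qWh_rec 0, zero_add, qWh_one, qWh_zero, show i + 1 + 2 = i + 2 + 1 by ring, ← h]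
    ring
  | more k h1 h2 =>
    rw [show i + (k + 2) + 2 = i + k + 2 + 2 by ring, qWh_rec (i + k + 2),
      show i + k + 2 + 1 = i + (k + 1) + 2 by ring, ← h1, ← h2, qWh_rec (k + 1), qWh_rec k]
    ring

lemma qWh_ne_zero (m : ℕ) : qWh m ≠ 0 := by
  intro h
  have h1 : qq ^ (2 * m) + 1 = 0 := by
    have h2 : qq ^ m * (qq⁻¹) ^ m = 1 := by
      rw [← mul_pow, mul_inv_cancel₀ qq_ne_zero, one_pow]
    rw [qWh_eq] at h
    linear_combination qq ^ m * h - h2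
  have h3 : algebraMap (Polynomial ℚ) (RatFunc ℚ) (Polynomial.X ^ (2 * m) + 1) = 0 := by
    rw [map_add, map_pow, map_one, RatFunc.algebraMap_X]
    exact h1
  rw [map_eq_zero_iff _ (RatFunc.algebraMap_injective ℚ)] at h3
  have h4 := congrArg (Polynomial.eval 1) h3
  norm_num at h4

lemma qNum_two_ne_zero : qNum 2 ≠ 0 := qWh_one ▸ qWh_ne_zero 1

/-! ### Rows of the Cartan matrix -/

/-- The value at the `0`-based vertex `r` of the type `D_(m+4)` Cartan matrix applied to the
vector with entries `f 0, ..., f (m + 3)`; the branch vertex is `m + 1`. -/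
noncomputable def rowSum (m : ℕ) (f : ℕ → RatFunc ℚ) (r : ℕ) : RatFunc ℚ :=
  qNum 2 * f r - (if r = 0 then 0 else if r = m + 3 then f (m + 1) else f (r - 1))
    - (if r ≤ m + 1 then f (r + 1) else 0) - (if r = m + 1 then f (m + 3) else 0)

lemma rowSum_typeD (m : ℕ) (f : ℕ → RatFunc ℚ) (r : Fin (m + 4)) :
    ∑ j : Fin (m + 4), (if r = j then qNum 2
      else if DnAdj (m + 4) (r.val + 1) (j.val + 1) then -1 else 0) * f j.val
      = rowSum m f r.val := by
  obtain ⟨r, hr⟩ := r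
  have hs : ∀ a : ℕ, a < m + 4 → ∀ c : RatFunc ℚ,
      ∑ j ∈ Finset.range (m + 4), (if j = a then c else 0) = c := by
    intro a ha c
    rw [Finset.sum_ite_eq' (Finset.range (m + 4)) a (fun _ => c),
      if_pos (Finset.mem_range.2 ha)]
  simp only [Fin.ext_iff]
  rw [Fin.sum_univ_eq_sum_range (fun j => (if r = j then qNum 2
      else if DnAdj (m + 4) (r + 1) (j + 1) then -1 else 0) * f j) (m + 4)]
  have key : ∀ j ∈ Finset.range (m + 4),
      (if r = j then qNum 2 else if DnAdj (m + 4) (r + 1) (j + 1) then -1 else 0) * f j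
      = (if j = r then qNum 2 * f r else 0)
        - (if j = (if r = m + 3 then m + 1 else r - 1) then
            (if r = 0 then 0 else if r = m + 3 then f (m + 1) else f (r - 1)) else 0)
        - (if j = (if r ≤ m + 1 then r + 1 else 0) then
            (if r ≤ m + 1 then f (r + 1) else 0) else 0)
        - (if j = m + 3 then (if r = m + 1 then f (m + 3) else 0) else 0) := by
    intro j hj
    rw [Finset.mem_range] at hj
    unfold DnAdj
    grind
  rw [Finset.sum_congr rfl key]
  simp only [Finset.sum_sub_distrib]
  rw [hs, hs, hs, hs, rowSum]
  all_goals (try split_ifs) <;> omega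

lemma rowSum_const_mul (m : ℕ) (c : RatFunc ℚ) (f : ℕ → RatFunc ℚ) (r : ℕ) :
    rowSum m (fun j => c * f j) r = c * rowSum m f r := by
  unfold rowSum
  split_ifs <;> ring

/-! ### The coweights -/

/-- The vector `⟨n - 1⟩ w_i` for `n = m + 4`, in `0`-based indices. -/
noncomputable def coweight (m i j : ℕ) : RatFunc ℚ :=
  if i ≤ m + 1 then
    (if j < i then qWh (m + 2 - i) * qNum (j + 1)
     else if j ≤ m + 1 then qNum (i + 1) * qWh (m + 2 - j)
     else qNum (i + 1))
  else if i = m + 2 then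
    (if j ≤ m + 1 then qNum (j + 1)
     else if j = m + 2 then qNum (m + 4) / qNum 2
     else qNum (m + 2) / qNum 2)
  else
    (if j ≤ m + 1 then qNum (j + 1)
     else if j = m + 2 then qNum (m + 2) / qNum 2
     else qNum (m + 4) / qNum 2)

/-- The recurrence of `[·]` read at the vertex `r`, with the missing neighbour of `0`
contributing `[0] = 0`. -/
lemma qNum_rec' (r : ℕ) :
    qNum (r + 2) = qNum 2 * qNum (r + 1) - (if r = 0 then 0 else qNum (r - 1 + 1)) := by
  rw [qNum_rec]
  rcases r with _ | r
  · simp [qNum_zero]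
  · simp

lemma rowSum_coweight_arm (m i r : ℕ) (hi : i ≤ m + 1) (hr : r < m + 4) :
    rowSum m (coweight m i) r = if r = i then qWh (m + 3) else 0 := by
  have h1 := qWh_one
  have h0 := qWh_zero
  rcases lt_trichotomy r i with h | rfl | h
  · have e := qNum_rec' r
    rcases Nat.lt_or_ge (r + 1) i with h' | h'
    · have : rowSum m (coweight m i) r = qWh (m + 2 - i) * (qNum 2 * qNum (r + 1)
          - (if r = 0 then 0 else qNum (r - 1 + 1)) - qNum (r + 2)) := by
        unfold rowSum coweight
        grind
      rw [this, e, if_neg h.ne]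
      ring
    · obtain rfl : i = r + 1 := by omega
      have : rowSum m (coweight m (r + 1)) r = qWh (m + 2 - (r + 1)) * (qNum 2 * qNum (r + 1)
          - (if r = 0 then 0 else qNum (r - 1 + 1)) - qNum (r + 2)) := by
        unfold rowSum coweight
        grind
      rw [this, e, if_neg h.ne]
      ring
  · obtain ⟨k, hk⟩ : ∃ k, m + 1 = r + k := ⟨m + 1 - r, by omega⟩
    have e := qNum_rec' r
    have d := qNum_mul_qWh_sub r k
    rw [show r + k + 2 = m + 3 by omega] at d
    have ek : m + 2 - r = k + 1 := by omega
    have : rowSum m (coweight m r) r = qWh (k + 1) * (qNum 2 * qNum (r + 1)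
          - (if r = 0 then 0 else qNum (r - 1 + 1))) - qNum (r + 1) * qWh k := by
      unfold rowSum coweight
      rcases Nat.eq_zero_or_pos k with rfl | hk0
      · grind
      · have ek' : m + 2 - (r + 1) = k := by omega
        grind
    rw [this, ← e, if_pos rfl, ← d]
    ring
  · rw [if_neg (by omega)]
    obtain ⟨s, rfl⟩ : ∃ s, r = s + 1 := ⟨r - 1, by omega⟩
    rcases Nat.lt_or_ge (s + 1) (m + 2) with h' | h'
    · obtain ⟨k, hk⟩ : ∃ k, m + 1 = s + 1 + k := ⟨m - s, by omega⟩
      have e := qWh_rec k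
      have ek : m + 2 - (s + 1) = k + 1 := by omega
      have ek2 : m + 2 - s = k + 2 := by omega
      have : rowSum m (coweight m i) (s + 1) = qNum (i + 1) *
          (qNum 2 * qWh (k + 1) - qWh (k + 2) - qWh k) := by
        unfold rowSum coweight
        rcases Nat.eq_zero_or_pos k with rfl | hk0
        · grind
        · have ek' : m + 2 - (s + 1 + 1) = k := by omega
          grind
      rw [this, e]
      ring
    · have : rowSum m (coweight m i) (s + 1) = qNum 2 * qNum (i + 1) - qNum (i + 1) * qWh 1 := by
        have ek : m + 2 - (m + 1) = 1 := by omega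
        unfold rowSum coweight
        grind
      rw [this, h1]
      ring

lemma rowSum_coweight_end (m i r : ℕ) (hi : i = m + 2 ∨ i = m + 3) (hr : r < m + 4) :
    rowSum m (coweight m i) r = if r = i then qWh (m + 3) else 0 := by
  have hne := qNum_two_ne_zero
  have e := qNum_rec' r
  have e2 := qNum_rec (m + 2)
  have d := qNum_sub (m + 2)
  have c4 : qNum 2 * (qNum (m + 4) / qNum 2) = qNum (m + 4) := mul_div_cancel₀ _ hne
  have c2 : qNum 2 * (qNum (m + 2) / qNum 2) = qNum (m + 2) := mul_div_cancel₀ _ hne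
  have c3 : qNum (m + 4) / qNum 2 + qNum (m + 2) / qNum 2 = qNum (m + 3) := by
    rw [← add_div, div_eq_iff hne]
    linear_combination e2
  unfold rowSum coweight
  rcases Nat.lt_or_ge r (m + 1) with h | h
  · grind
  · obtain rfl | rfl | rfl : r = m + 1 ∨ r = m + 2 ∨ r = m + 3 := by omega
    all_goals rcases hi with rfl | rfl
    all_goals grind

/-- For the symmetrized `q`-Cartan matrix `B(q)` of type `D_n`, the explicit vectors `w i`
(fundamental coweights) satisfy `B(q) ⬝ w i = e_i`, i.e. `w i` is the `i`-th column
of `B(q)⁻¹`. Indices are `0`-based: the index `i : Fin n` corresponds to `i+1` in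
the `1`-based (Bourbaki) labelling of the paper. -/
theorem typeD_qCartan_coweights (n : ℕ) (hn : 4 ≤ n)
    (B : Matrix (Fin n) (Fin n) (RatFunc ℚ))
    (hB : ∀ i j : Fin n, B i j =
      if i = j then qNum 2
      else if DnAdj n (i.val + 1) (j.val + 1) then -1
      else 0)
    (w : Fin n → Fin n → RatFunc ℚ)
    (hw : ∀ i j : Fin n, w i j = (qWh (n - 1))⁻¹ *
      (if i.val + 3 ≤ n then
        -- the case 1 ≤ i ≤ n−2 (1-based)
        (if j.val < i.val then qWh (n - i.val - 2) * qNum (j.val + 1)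
         else if j.val + 3 ≤ n then qNum (i.val + 1) * qWh (n - j.val - 2)
         else qNum (i.val + 1))
       else if i.val + 2 = n then
        -- the case i = n−1 (1-based)
        (if j.val + 3 ≤ n then qNum (j.val + 1)
         else if j.val + 2 = n then qNum n / qNum 2
         else qNum (n - 2) / qNum 2)
       else
        -- the case i = n (1-based)
        (if j.val + 3 ≤ n then qNum (j.val + 1)
         else if j.val + 2 = n then qNum (n - 2) / qNum 2
         else qNum n / qNum 2))) :
    ∀ i : Fin n, B.mulVec (w i) = Pi.single i 1 := by
  intro i
  obtain ⟨m, rfl⟩ : ∃ m, n = m + 4 := ⟨n - 4, by omega⟩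
  have hw' : ∀ j : Fin (m + 4), w i j = (qWh (m + 3))⁻¹ * coweight m i.val j.val := by
    intro j
    have a1 : ∀ a : ℕ, a + 3 ≤ m + 4 ↔ a ≤ m + 1 := by omega
    have a2 : ∀ a : ℕ, a + 2 = m + 4 ↔ a = m + 2 := by omega
    have a3 : ∀ a : ℕ, m + 4 - a - 2 = m + 2 - a := by omega
    rw [hw i j, coweight]
    simp only [a1, a2, a3, show m + 4 - 1 = m + 3 by omega, show m + 4 - 2 = m + 2 by omega]
  funext r
  have hsum : B.mulVec (w i) r
      = (qWh (m + 3))⁻¹ * rowSum m (coweight m i.val) r.val := by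
    rw [← rowSum_const_mul, ← rowSum_typeD]
    simp only [Matrix.mulVec, dotProduct, hB, hw']
  have hrow : rowSum m (coweight m i.val) r.val = if r.val = i.val then qWh (m + 3) else 0 := by
    rcases Nat.lt_or_ge i.val (m + 2) with h | h
    · exact rowSum_coweight_arm m _ _ (by omega) r.isLt
    · exact rowSum_coweight_end m _ _ (by omega) r.isLt
  rw [hsum, hrow, Pi.single_apply]
  simp only [Fin.ext_iff]
  split_ifs
  · exact inv_mul_cancel₀ (qWh_ne_zero _)
  · exact mul_zero _
end

section
/- Fix an integer n ≥ 4 and let B(q) be the n×n matrix over ℚ(q) with B(q)_{ii} = [2]_q for all i, B(q)_{ij} = −1 whenever {i,j} is an edge of the D_n Dynkin diagram (edges {i,i+1} for 1 ≤ i ≤ n−2 together with {n−2,n}), and 0 otherwise (the symmetrized q-Cartan matrix of type D_n). Then B(q) is invertible and every entry of the matrix [2n−2]_q · B(q)^{−1} lies in ℕ[q,q^{−1}]. -/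
/-- An element of `ℚ(q)` lies in `ℕ[q,q^{−1}]` if it is a Laurent polynomial in `q`
with nonnegative integer coefficients. -/
def IsNatLaurent (f : RatFunc ℚ) : Prop :=
  ∃ c : ℤ →₀ ℕ, f = c.sum fun k n => (n : RatFunc ℚ) * qq ^ k

lemma qq_pow_ne_one (k : ℕ) (hk : k ≠ 0) : qq ^ k ≠ 1 := by
  intro h
  have h1 : (Polynomial.X : Polynomial ℚ) ^ k = 1 := by
    apply RatFunc.algebraMap_injective ℚ
    simpa [qq] using h
  have h2 := congrArg Polynomial.natDegree h1
  simp at h2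
  exact hk h2

lemma qq_zpow_sub_ne_zero (k : ℕ) (hk : k ≠ 0) : qq ^ (k : ℤ) - qq ^ (-(k : ℤ)) ≠ 0 := by
  intro h
  apply qq_pow_ne_one (2 * k) (by omega)
  have h0 : qq ^ k ≠ 0 := pow_ne_zero _ qq_ne_zero
  rw [zpow_neg, zpow_natCast] at h
  field_simp at h
  rw [mul_comm 2 k, pow_mul]
  linear_combination h

lemma qq_sub_inv_ne_zero : qq - qq⁻¹ ≠ 0 := by
  simpa using qq_zpow_sub_ne_zero 1 one_ne_zero

/-! ### Quantum integers -/

/-- The balanced geometric sum. -/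
lemma sub_inv_mul_geom {x : RatFunc ℚ} (hx : x ≠ 0) (r : ℕ) :
    (x - x⁻¹) * ∑ i ∈ Finset.range r, x ^ ((r : ℤ) - 1 - 2 * (i : ℤ)) =
      x ^ (r : ℤ) - x ^ (-(r : ℤ)) := by
  induction r with
  | zero => simp
  | succ r ih =>
    have h1 : ∀ i ∈ Finset.range r, x ^ (((r + 1 : ℕ) : ℤ) - 1 - 2 * (i : ℤ)) =
        x * x ^ ((r : ℤ) - 1 - 2 * (i : ℤ)) := by
      intro i _
      rw [← zpow_one_add₀ hx]
      congr 1
      push_cast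
      ring
    have h2 : ((r + 1 : ℕ) : ℤ) - 1 - 2 * (r : ℤ) = -(r : ℤ) := by push_cast; ring
    rw [Finset.sum_range_succ, Finset.sum_congr rfl h1, ← Finset.mul_sum, h2, mul_add,
      mul_left_comm, ih]
    push_cast
    rw [neg_add, zpow_add₀ hx, zpow_add₀ hx, zpow_neg, zpow_neg, zpow_one]
    have := zpow_ne_zero (r : ℤ) hx
    field_simp
    ring

/-- The quantum integer `[k]_q` in closed form, for an arbitrary integer `k`. -/
noncomputable def qInt (k : ℤ) : RatFunc ℚ := (qq ^ k - qq ^ (-k)) / (qq - qq⁻¹)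

/-- The element `⟨k⟩_q = q^k + q^{-k}`. -/
noncomputable def qAngle (k : ℤ) : RatFunc ℚ := qq ^ k + qq ^ (-k)

lemma qNum_eq_qInt (m : ℕ) : qNum m = qInt m := by
  rw [qInt, eq_div_iff qq_sub_inv_ne_zero, mul_comm, qNum, sub_inv_mul_geom qq_ne_zero]

lemma qInt_ne_zero (k : ℕ) (hk : k ≠ 0) : qInt k ≠ 0 :=
  div_ne_zero (qq_zpow_sub_ne_zero k hk) qq_sub_inv_ne_zero

lemma qInt_one : qInt 1 = 1 := by
  rw [qInt, zpow_neg, zpow_one, div_self qq_sub_inv_ne_zero]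

lemma qInt_two : qInt 2 = qq + qq⁻¹ := by
  rw [qInt, div_eq_iff qq_sub_inv_ne_zero, zpow_neg, zpow_ofNat]
  ring

lemma qAngle_one : qAngle 1 = qInt 2 := by simp [qAngle, qInt_two]

lemma qAngle_zero : qAngle 0 = 2 := by norm_num [qAngle]

lemma qInt_two_ne_zero : qInt 2 ≠ 0 := by
  exact_mod_cast qInt_ne_zero 2 two_ne_zero

lemma qInt_rec (k : ℤ) : qInt 2 * qInt k = qInt (k - 1) + qInt (k + 1) := by
  have h := qq_ne_zero
  have h' := qq_sub_inv_ne_zero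
  rw [qInt_two, qInt, qInt, qInt, ← add_div, mul_div_assoc']
  congr 1
  rw [neg_sub, neg_add, zpow_sub₀ h, zpow_add₀ h, zpow_sub₀ h, zpow_add₀ h, zpow_neg, zpow_neg,
    zpow_one]
  field_simp
  ring

lemma qAngle_rec (k : ℤ) : qInt 2 * qAngle k = qAngle (k - 1) + qAngle (k + 1) := by
  have h := qq_ne_zero
  rw [qInt_two, qAngle, qAngle, qAngle]
  rw [neg_sub, neg_add, zpow_sub₀ h, zpow_add₀ h, zpow_sub₀ h, zpow_add₀ h, zpow_neg, zpow_neg,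
    zpow_one]
  field_simp
  ring

/-- A Casoratian (discrete Wronskian) identity, giving the diagonal entries in the chain. -/
lemma qInt_wronskian (a b : ℤ) :
    qInt (a + 1) * qAngle b - qInt a * qAngle (b - 1) = qAngle (a + b) := by
  have h := qq_ne_zero
  have h' := qq_sub_inv_ne_zero
  have ha := zpow_ne_zero a h
  have hb := zpow_ne_zero b h
  rw [qInt, qInt, div_mul_eq_mul_div, div_mul_eq_mul_div, ← sub_div, div_eq_iff h', qAngle, qAngle,
    qAngle]
  simp only [neg_sub, neg_add, zpow_sub₀ h, zpow_add₀ h, zpow_neg, zpow_one]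
  field_simp
  ring

lemma qInt_sub (k : ℤ) : qInt (k + 1) - qInt (k - 1) = qAngle k := by
  have := qInt_wronskian k 0
  have h2 := qInt_rec k
  simp only [qAngle_zero, zero_sub, add_zero] at *
  have h3 : qAngle (-1) = qInt 2 := by simp [qAngle, qInt_two, add_comm]
  rw [h3] at this
  linear_combination this + h2

lemma qInt_two_mul (k : ℤ) : qInt (2 * k) = qInt k * qAngle k := by
  rw [qInt, qInt, qAngle, div_mul_eq_mul_div]
  congr 1
  rw [two_mul, neg_add, zpow_add₀ qq_ne_zero, zpow_add₀ qq_ne_zero]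
  ring

/-! ### Laurent polynomials with nonnegative integer coefficients -/

lemma isNatLaurent_zero : IsNatLaurent 0 := ⟨0, by simp⟩

lemma isNatLaurent_monomial (n : ℕ) (k : ℤ) : IsNatLaurent ((n : RatFunc ℚ) * qq ^ k) :=
  ⟨Finsupp.single k n, by simp⟩

lemma isNatLaurent_zpow (k : ℤ) : IsNatLaurent (qq ^ k) := by
  simpa using isNatLaurent_monomial 1 k

lemma IsNatLaurent.add {f g : RatFunc ℚ} (hf : IsNatLaurent f) (hg : IsNatLaurent g) :
    IsNatLaurent (f + g) := by
  obtain ⟨c, rfl⟩ := hf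
  obtain ⟨d, rfl⟩ := hg
  refine ⟨c + d, ?_⟩
  rw [Finsupp.sum_add_index']
  · simp
  · intros
    push_cast
    ring

lemma isNatLaurent_sum {ι : Type*} (s : Finset ι) (f : ι → RatFunc ℚ)
    (h : ∀ i ∈ s, IsNatLaurent (f i)) : IsNatLaurent (∑ i ∈ s, f i) :=
  Finset.sum_induction f IsNatLaurent (fun _ _ => IsNatLaurent.add) isNatLaurent_zero h

lemma IsNatLaurent.mul {f g : RatFunc ℚ} (hf : IsNatLaurent f) (hg : IsNatLaurent g) :
    IsNatLaurent (f * g) := by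
  obtain ⟨c, rfl⟩ := hf
  obtain ⟨d, rfl⟩ := hg
  rw [Finsupp.sum, Finsupp.sum, Finset.sum_mul_sum]
  refine isNatLaurent_sum _ _ fun i _ => isNatLaurent_sum _ _ fun j _ => ?_
  have h := isNatLaurent_monomial (c i * d j) (i + j)
  rw [zpow_add₀ qq_ne_zero] at h
  push_cast at h
  convert h using 1
  ring

lemma isNatLaurent_qInt (k : ℕ) : IsNatLaurent (qInt k) := by
  rw [← qNum_eq_qInt]
  exact isNatLaurent_sum _ _ fun i _ => isNatLaurent_zpow _

lemma isNatLaurent_qAngle (k : ℤ) : IsNatLaurent (qAngle k) :=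
  (isNatLaurent_zpow _).add (isNatLaurent_zpow _)

/-- The quotient `[2r]_q / [2]_q` is `[r]_{q²}`. -/
lemma isNatLaurent_qInt_even (r : ℕ) : IsNatLaurent (qInt (2 * r) / qInt 2) := by
  have h := sub_inv_mul_geom (pow_ne_zero 2 qq_ne_zero) r
  have h' := qq_sub_inv_ne_zero
  have key : qInt (2 * r) / qInt 2 =
      ∑ i ∈ Finset.range r, (qq ^ 2) ^ ((r : ℤ) - 1 - 2 * (i : ℤ)) := by
    rw [div_eq_iff qInt_two_ne_zero, qInt, div_eq_iff h', qInt_two]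
    have e : ∀ k : ℤ, (qq ^ 2) ^ k = qq ^ (2 * k) := fun k => by
      rw [zpow_mul, zpow_ofNat]
    rw [e (r : ℤ), e (-(r : ℤ)), mul_neg] at h
    rw [← h]
    ring
  rw [key]
  refine isNatLaurent_sum _ _ fun i _ => ?_
  rw [← zpow_natCast, ← zpow_mul]
  exact isNatLaurent_zpow _

lemma isNatLaurent_consecutive (k : ℕ) :
    IsNatLaurent (qInt k * qInt (k + 1 : ℕ) / qInt 2) := by
  rcases Nat.even_or_odd' k with ⟨r, hr | hr⟩
  · have h := (isNatLaurent_qInt_even r).mul (isNatLaurent_qInt (k + 1))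
    rw [show (k : ℤ) = 2 * (r : ℤ) by omega]
    convert h using 1
    ring
  · have h := (isNatLaurent_qInt k).mul (isNatLaurent_qInt_even (r + 1))
    rw [show ((k + 1 : ℕ) : ℤ) = 2 * ((r + 1 : ℕ) : ℤ) by omega]
    convert h using 1
    ring

/-! ### The inverse matrix -/

/-- The `(i, j)` entry of `⟨m+1⟩_q · B(q)⁻¹` in type `D_{m+2}`, with `0`-based indices: the chain
is `0, …, m - 1`, and the leaves `m`, `m + 1` are attached to `m - 1`. -/
noncomputable def dnInv (m i j : ℕ) : RatFunc ℚ :=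
  if i < m then
    if j < m then
      if i ≤ j then qInt (i + 1) * qAngle (m - j) else qInt (j + 1) * qAngle (m - i)
    else qInt (i + 1)
  else
    if j < m then qInt (j + 1)
    else if i = j then qInt (m + 2) / qInt 2 else qInt m / qInt 2

section Entries

variable {m i j : ℕ}

lemma dnInv_chain_le (hij : i ≤ j) (hj : j < m) :
    dnInv m i j = qInt (i + 1) * qAngle (m - j) := by
  rw [dnInv, if_pos (by omega), if_pos hj, if_pos hij]

lemma dnInv_chain_ge (hij : j ≤ i) (hi : i < m) :
    dnInv m i j = qInt (j + 1) * qAngle (m - i) := by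
  rcases hij.eq_or_lt with rfl | h
  · exact dnInv_chain_le le_rfl hi
  · rw [dnInv, if_pos hi, if_pos (by omega), if_neg (by omega)]

lemma dnInv_chain_leaf (hi : i < m) (hj : m ≤ j) : dnInv m i j = qInt (i + 1) := by
  rw [dnInv, if_pos hi, if_neg (by omega)]

lemma dnInv_leaf_chain (hi : m ≤ i) (hj : j < m) : dnInv m i j = qInt (j + 1) := by
  rw [dnInv, if_neg (by omega), if_pos hj]

lemma dnInv_leaf_self (hi : m ≤ i) : dnInv m i i = qInt (m + 2) / qInt 2 := by
  rw [dnInv, if_neg (by omega), if_neg (by omega), if_pos rfl]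

lemma dnInv_leaf_ne (hi : m ≤ i) (hj : m ≤ j) (hij : i ≠ j) : dnInv m i j = qInt m / qInt 2 := by
  rw [dnInv, if_neg (by omega), if_neg (by omega), if_neg hij]

end Entries

lemma isNatLaurent_qInt_mul_dnInv (m i j : ℕ) : IsNatLaurent (qInt (m + 1) * dnInv m i j) := by
  have h0 := isNatLaurent_qInt (m + 1)
  have hi := isNatLaurent_qInt (i + 1)
  have hj := isNatLaurent_qInt (j + 1)
  have h1 := isNatLaurent_consecutive m
  have h2 := isNatLaurent_consecutive (m + 1)
  push_cast at h0 hi hj h1 h2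
  rw [show (m : ℤ) + 1 + 1 = m + 2 by ring] at h2
  unfold dnInv
  split_ifs
  · exact h0.mul (hi.mul (isNatLaurent_qAngle _))
  · exact h0.mul (hj.mul (isNatLaurent_qAngle _))
  · exact h0.mul hi
  · exact h0.mul hj
  · rwa [mul_div_assoc']
  · rwa [mul_div_assoc', mul_comm (qInt _)]

/-- The entry of the `q`-Cartan matrix of type `D_{m+2}`, for natural number indices. -/
noncomputable def dnCartan (m i k : ℕ) : RatFunc ℚ :=
  if i = k then qInt 2 else if DnAdj (m + 2) (i + 1) (k + 1) then -1 else 0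

section RowSums

variable (m : ℕ) (f : ℕ → RatFunc ℚ)

lemma dn_row_zero (hm : 2 ≤ m) :
    ∑ k ∈ Finset.range (m + 2), dnCartan m 0 k * f k = qInt 2 * f 0 - f 1 := by
  have h : ∀ k ∈ Finset.range (m + 2), dnCartan m 0 k * f k =
      (if k = 0 then qInt 2 * f k else 0) - (if k = 1 then f k else 0) := by
    intro k hk
    rw [Finset.mem_range] at hk
    unfold dnCartan
    split_ifs <;> (try simp only [DnAdj] at *) <;> first | omega | (subst_vars; ring)
  rw [Finset.sum_congr rfl h, Finset.sum_sub_distrib, Finset.sum_ite_eq', Finset.sum_ite_eq']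
  simp

lemma dn_row_chain (i : ℕ) (hi : i + 2 < m) :
    ∑ k ∈ Finset.range (m + 2), dnCartan m (i + 1) k * f k =
      qInt 2 * f (i + 1) - f i - f (i + 2) := by
  have h : ∀ k ∈ Finset.range (m + 2), dnCartan m (i + 1) k * f k =
      (if k = i + 1 then qInt 2 * f k else 0) - (if k = i then f k else 0)
        - (if k = i + 2 then f k else 0) := by
    intro k hk
    rw [Finset.mem_range] at hk
    unfold dnCartan
    split_ifs <;> (try simp only [DnAdj] at *) <;> first | omega | (subst_vars; ring)
  rw [Finset.sum_congr rfl h, Finset.sum_sub_distrib, Finset.sum_sub_distrib, Finset.sum_ite_eq',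
    Finset.sum_ite_eq', Finset.sum_ite_eq']
  simp only [Finset.mem_range]
  rw [if_pos (by omega), if_pos (by omega), if_pos (by omega)]

lemma dn_row_branch (i : ℕ) (hi : i + 2 = m) :
    ∑ k ∈ Finset.range (m + 2), dnCartan m (i + 1) k * f k =
      qInt 2 * f (i + 1) - f i - f m - f (m + 1) := by
  have h : ∀ k ∈ Finset.range (m + 2), dnCartan m (i + 1) k * f k =
      (if k = i + 1 then qInt 2 * f k else 0) - (if k = i then f k else 0)
        - (if k = m then f k else 0) - (if k = m + 1 then f k else 0) := by
    intro k hk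
    rw [Finset.mem_range] at hk
    unfold dnCartan
    split_ifs <;> (try simp only [DnAdj] at *) <;> first | omega | (subst_vars; ring)
  rw [Finset.sum_congr rfl h, Finset.sum_sub_distrib, Finset.sum_sub_distrib,
    Finset.sum_sub_distrib, Finset.sum_ite_eq', Finset.sum_ite_eq', Finset.sum_ite_eq',
    Finset.sum_ite_eq']
  simp only [Finset.mem_range]
  rw [if_pos (by omega), if_pos (by omega), if_pos (by omega), if_pos (by omega)]

lemma dn_row_leaf (p i : ℕ) (hm : m = p + 1) (h1 : m ≤ i) (h2 : i < m + 2) :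
    ∑ k ∈ Finset.range (m + 2), dnCartan m i k * f k = qInt 2 * f i - f p := by
  have h : ∀ k ∈ Finset.range (m + 2), dnCartan m i k * f k =
      (if k = i then qInt 2 * f k else 0) - (if k = p then f k else 0) := by
    intro k hk
    rw [Finset.mem_range] at hk
    unfold dnCartan
    split_ifs <;> (try simp only [DnAdj] at *) <;> first | omega | (subst_vars; ring)
  rw [Finset.sum_congr rfl h, Finset.sum_sub_distrib, Finset.sum_ite_eq', Finset.sum_ite_eq']
  simp only [Finset.mem_range]
  rw [if_pos (by omega), if_pos (by omega)]

end RowSums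

lemma dn_row_identity (m i j : ℕ) (hm : 2 ≤ m) (hi : i < m + 2) (hj : j < m + 2) :
    ∑ k ∈ Finset.range (m + 2), dnCartan m i k * dnInv m k j =
      if i = j then qAngle (m + 1) else 0 := by
  rcases Nat.lt_or_ge i m with him | him
  · rcases i with _ | i
    · -- The first chain vertex: the missing neighbour corresponds to `[0] = 0`.
      rw [dn_row_zero m _ hm]
      rcases Nat.lt_or_ge j m with hjm | hjm
      · rcases j with _ | j
        · rw [dnInv_chain_ge le_rfl (by omega), dnInv_chain_ge (by omega) (by omega), if_pos rfl]
          have h := qAngle_rec m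
          push_cast
          rw [qInt_one, sub_zero]
          linear_combination h
        · rw [dnInv_chain_le (by omega) hjm, dnInv_chain_le (by omega) hjm, if_neg (by omega)]
          norm_num [qInt_one]
      · rw [dnInv_chain_leaf (by omega) hjm, dnInv_chain_leaf (by omega) hjm, if_neg (by omega)]
        norm_num [qInt_one]
    · have hQ := qInt_rec (i + 2)
      rw [show (i : ℤ) + 2 - 1 = i + 1 by ring, show (i : ℤ) + 2 + 1 = i + 3 by ring] at hQ
      rcases Nat.lt_or_ge (i + 2) m with him2 | him2
      · rw [dn_row_chain m _ i him2]
        rcases Nat.lt_or_ge j m with hjm | hjm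
        · rcases lt_trichotomy (i + 1) j with h | h | h
          · rw [dnInv_chain_le (by omega) hjm, dnInv_chain_le (by omega) hjm,
              dnInv_chain_le (by omega) hjm, if_neg (by omega)]
            push_cast
            rw [show (i : ℤ) + 1 + 1 = i + 2 by ring, show (i : ℤ) + 2 + 1 = i + 3 by ring]
            linear_combination qAngle (m - j) * hQ
          · subst h
            rw [dnInv_chain_le le_rfl hjm, dnInv_chain_le (by omega) hjm,
              dnInv_chain_ge (by omega) him2, if_pos rfl]
            have hW := qInt_wronskian (i + 2) (m - (i + 1))
            rw [show (i : ℤ) + 2 + 1 = i + 3 by ring,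
              show (m : ℤ) - (i + 1) - 1 = m - (i + 2) by ring,
              show (i : ℤ) + 2 + (m - (i + 1)) = m + 1 by ring] at hW
            push_cast
            rw [show (i : ℤ) + 1 + 1 = i + 2 by ring]
            linear_combination qAngle (m - (i + 1)) * hQ + hW
          · rw [dnInv_chain_ge (by omega) him, dnInv_chain_ge (by omega) (by omega),
              dnInv_chain_ge (by omega) him2, if_neg (by omega)]
            have hA := qAngle_rec (m - (i + 1))
            rw [show (m : ℤ) - (i + 1) - 1 = m - (i + 2) by ring,
              show (m : ℤ) - (i + 1) + 1 = m - i by ring] at hA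
            push_cast
            linear_combination qInt (j + 1) * hA
        · rw [dnInv_chain_leaf him hjm, dnInv_chain_leaf (by omega) hjm,
            dnInv_chain_leaf him2 hjm, if_neg (by omega)]
          push_cast
          rw [show (i : ℤ) + 1 + 1 = i + 2 by ring, show (i : ℤ) + 2 + 1 = i + 3 by ring]
          linear_combination hQ
      · -- The branch vertex: the two leaves together play the role of `⟨0⟩ = 2`.
        obtain rfl : m = i + 2 := by omega
        rw [dn_row_branch _ _ i rfl]
        rcases Nat.lt_or_ge j (i + 2) with hjm | hjm
        · rw [dnInv_leaf_chain le_rfl hjm, dnInv_leaf_chain (i := i + 2 + 1) (by omega) hjm]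
          rcases Nat.lt_or_ge i j with h | h
          · obtain rfl : j = i + 1 := by omega
            rw [dnInv_chain_le le_rfl hjm, dnInv_chain_le (by omega) hjm, if_pos rfl]
            have hW := qInt_wronskian (i + 2) 1
            rw [show (i : ℤ) + 2 + 1 = i + 3 by ring, sub_self, qAngle_zero] at hW
            push_cast
            rw [show (i : ℤ) + 1 + 1 = i + 2 by ring, show (i : ℤ) + 2 - (i + 1) = 1 by ring,
              show (i : ℤ) + 2 + 1 = i + 3 by ring]
            linear_combination qAngle 1 * hQ + hW
          · rw [dnInv_chain_ge (by omega) him, dnInv_chain_ge h (by omega), if_neg (by omega)]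
            have hA := qAngle_rec 1
            rw [sub_self, qAngle_zero, one_add_one_eq_two] at hA
            push_cast
            rw [show (i : ℤ) + 2 - (i + 1) = 1 by ring, show (i : ℤ) + 2 - i = 2 by ring]
            linear_combination qInt (j + 1) * hA
        · rw [dnInv_chain_leaf him hjm, dnInv_chain_leaf (by omega) hjm, if_neg (by omega)]
          have hQ' := qInt_rec (i + 3)
          rw [show (i : ℤ) + 3 - 1 = i + 2 by ring, show (i : ℤ) + 3 + 1 = i + 4 by ring] at hQ'
          have hleaf : dnInv (i + 2) (i + 2) j + dnInv (i + 2) (i + 2 + 1) j = qInt (i + 3) := by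
            have h2 := qInt_two_ne_zero
            rcases hjm.eq_or_lt with h | h
            · subst h
              rw [dnInv_leaf_self le_rfl, dnInv_leaf_ne (by omega) le_rfl (by omega)]
              push_cast
              rw [show (i : ℤ) + 2 + 2 = i + 4 by ring]
              field_simp
              linear_combination -hQ'
            · obtain rfl : j = i + 2 + 1 := by omega
              rw [dnInv_leaf_self (by omega), dnInv_leaf_ne le_rfl (by omega) (by omega)]
              push_cast
              rw [show (i : ℤ) + 2 + 2 = i + 4 by ring]
              field_simp
              linear_combination -hQ'
          push_cast
          rw [show (i : ℤ) + 1 + 1 = i + 2 by ring]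
          linear_combination hQ - hleaf
  · obtain ⟨p, rfl⟩ : ∃ p, m = p + 1 := ⟨m - 1, by omega⟩
    rw [dn_row_leaf _ _ p i rfl him hi]
    have h2 := qInt_two_ne_zero
    rcases Nat.lt_or_ge j (p + 1) with hjm | hjm
    · rw [dnInv_leaf_chain him hjm, dnInv_chain_ge (by omega) (by omega), if_neg (by omega)]
      push_cast
      rw [show (p : ℤ) + 1 - p = 1 by ring, qAngle_one]
      ring
    · rw [dnInv_chain_leaf (i := p) (by omega) hjm]
      by_cases hij : i = j
      · subst hij
        rw [dnInv_leaf_self him, if_pos rfl, mul_div_cancel₀ _ h2]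
        have h := qInt_sub (p + 2)
        rw [show (p : ℤ) + 2 + 1 = p + 3 by ring, show (p : ℤ) + 2 - 1 = p + 1 by ring] at h
        push_cast
        rw [show (p : ℤ) + 1 + 2 = p + 3 by ring, show (p : ℤ) + 1 + 1 = p + 2 by ring]
        exact h
      · rw [dnInv_leaf_ne him hjm hij, if_neg hij, mul_div_cancel₀ _ h2]
        push_cast
        ring

/-- The symmetrized `q`-Cartan matrix of type `D_n` is invertible, and every entry of
`[2n−2]_q · B(q)⁻¹` lies in `ℕ[q,q⁻¹]`. Indices are `0`-based. -/
theorem typeD_qCartan_inverse (n : ℕ) (hn : 4 ≤ n)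
    (B : Matrix (Fin n) (Fin n) (RatFunc ℚ))
    (hB : ∀ i j : Fin n, B i j =
      if i = j then qNum 2
      else if DnAdj n (i.val + 1) (j.val + 1) then -1
      else 0) :
    IsUnit B ∧ ∀ i j : Fin n, IsNatLaurent (qNum (2 * n - 2) * B⁻¹ i j) := by
  obtain ⟨m, rfl⟩ : ∃ m, n = m + 2 := ⟨n - 2, by omega⟩
  set M : Matrix (Fin (m + 2)) (Fin (m + 2)) (RatFunc ℚ) := Matrix.of fun i j => dnInv m i j
  have hnum : qNum (2 * (m + 2) - 2) = qInt (m + 1) * qAngle (m + 1) := by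
    rw [qNum_eq_qInt, ← qInt_two_mul]
    congr 1
  have hne : qInt (m + 1) * qAngle (m + 1) ≠ 0 := by
    rw [← hnum, qNum_eq_qInt]
    exact qInt_ne_zero _ (by omega)
  have hA : qAngle (m + 1) ≠ 0 := right_ne_zero_of_mul hne
  have hBM : B * M = qAngle (m + 1) • (1 : Matrix (Fin (m + 2)) (Fin (m + 2)) (RatFunc ℚ)) := by
    ext i j
    have h := dn_row_identity m i j (by omega) i.2 j.2
    rw [← Fin.sum_univ_eq_sum_range (fun k => dnCartan m i k * dnInv m k j)] at h
    have hB' : ∀ k, B i k = dnCartan m i k := by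
      intro k
      simp only [hB, dnCartan, Fin.ext_iff, qNum_eq_qInt, Nat.cast_ofNat]
    simp only [Matrix.mul_apply, hB', M, Matrix.of_apply, h, Matrix.smul_apply, Matrix.one_apply,
      Fin.ext_iff, smul_eq_mul, mul_ite, mul_one, mul_zero]
  have hinv : B * ((qAngle (m + 1))⁻¹ • M) = 1 := by
    rw [Matrix.mul_smul, hBM, smul_smul, inv_mul_cancel₀ hA, one_smul]
  refine ⟨IsUnit.of_mul_eq_one _ hinv, fun i j => ?_⟩
  rw [Matrix.inv_eq_right_inv hinv, hnum]
  have h := isNatLaurent_qInt_mul_dnInv m i j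
  convert h using 1
  simp only [M, Matrix.smul_apply, Matrix.of_apply, smul_eq_mul]
  field_simp
end
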